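/- Let s ↔ B be a constraint with B ∈ N_C, and for n ≥ 1 let α_n = (B ⊕← ∃r₁.B)·(B ⊕← ∃r₂.B)·…·(B ⊕← ∃rₙ.B) be a sequence of n basic ground actions. Then the shape expression on the right-hand side of the constraint for s in tr_{α_n}({s ↔ B}) contains exactly 2ⁿ occurrences of the class name B. -/

import Mathlib

/-!
Substituting `ψ` for `B` puts one copy of `ψ` at each occurrence of `B` and affects no other
occurrence, so the number of occurrences of `B` gets multiplied by that of `ψ`
(`Shape.count_substCls`, `SPath.count_substCls`).  Each action `B ⊕← ∃rᵢ.B` is regressed by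
substituting `B ∨ ∃rᵢ.B`, which has two occurrences of `B`; starting from the single occurrence
in `s ↔ B`, regression through `n` such actions therefore gives `2 ^ n`
(`exists_trC_addCls_eq`).
-/

set_option maxHeartbeats 1000000

/-! ### Basic vocabularies: mutually disjoint countably infinite sets -/

structure Node where
  id : ℕ
deriving DecidableEq

structure ClassName where
  id : ℕ
deriving DecidableEq

structure PropName where
  id : ℕ
deriving DecidableEq

structure ShapeName where
  id : ℕ
deriving DecidableEq

structure Var where
  id : ℕ
deriving DecidableEq

/-! ### RDF data graphs -/

inductive Atom where
  | cls : ClassName → Node → Atom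
  | prop : PropName → Node → Node → Atom
deriving DecidableEq

def Atom.nodeSet : Atom → Set Node
  | .cls _ a => {a}
  | .prop _ a b => {a, b}

/-- the nodes `V(G)` occurring in a set of atoms -/
def graphNodes (G : Set Atom) : Set Node := ⋃ t ∈ G, t.nodeSet

/-! ### Syntax of SHACL⁺ shape and path expressions (nodes drawn from `ν`) -/

mutual
inductive Shape (ν : Type) where
  | top : Shape ν
  | name : ShapeName → Shape ν
  | cls : ClassName → Shape ν
  | const : ν → Shape ν
  | and : Shape ν → Shape ν → Shape ν
  | not : Shape ν → Shape ν
  | geq : ℕ → SPath ν → Shape ν → Shape ν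
  | eq : SPath ν → PropName → Shape ν
  | disj : SPath ν → PropName → Shape ν
  | closed : Finset PropName → Shape ν

inductive SPath (ν : Type) where
  | prop : PropName → SPath ν
  | inv : PropName → SPath ν
  | shapes : Shape ν → Shape ν → SPath ν
  | comp : SPath ν → SPath ν → SPath ν
  | union : SPath ν → SPath ν → SPath ν
  | star : SPath ν → SPath ν
  | diff : SPath ν → SPath ν → SPath ν
end

/-- the abbreviation `φ ∨ ψ := ¬(¬φ ∧ ¬ψ)` -/
def Shape.or {ν : Type} (φ ψ : Shape ν) : Shape ν := .not (.and (.not φ) (.not ψ))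

/-! ### Semantics: assignments and evaluation -/

/-- An assignment `I = G ∪ L` for a data graph `G`: a labelling of nodes of `V(G)`
by shape names. -/
structure Assignment where
  graph : Set Atom
  label : ShapeName → Node → Prop
  label_mem : ∀ s a, label s a → a ∈ graphNodes graph

mutual
def evalShape (I : Assignment) : Shape Node → Set Node
  | .top => graphNodes I.graph
  | .name s => {a | I.label s a}
  | .cls B => {a | Atom.cls B a ∈ I.graph}
  | .const c => {c}
  | .and φ ψ => evalShape I φ ∩ evalShape I ψ
  | .not φ => graphNodes I.graph \ evalShape I φ
  | .geq n E φ => {c | n ≤ Set.ncard {d | (c, d) ∈ evalPath I E ∧ d ∈ evalShape I φ}}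
  | .eq E p => {c | ∀ d, (c, d) ∈ evalPath I E ↔ Atom.prop p c d ∈ I.graph}
  | .disj E p => {c | ¬ ∃ d, (c, d) ∈ evalPath I E ∧ Atom.prop p c d ∈ I.graph}
  | .closed P => {c | ∀ p, p ∉ P → ∀ d, Atom.prop p c d ∉ I.graph}

def evalPath (I : Assignment) : SPath Node → Set (Node × Node)
  | .prop p => {x | Atom.prop p x.1 x.2 ∈ I.graph}
  | .inv p => {x | Atom.prop p x.2 x.1 ∈ I.graph}
  | .shapes φ ψ => (evalShape I φ) ×ˢ (evalShape I ψ)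
  | .comp E F => {x | ∃ d, (x.1, d) ∈ evalPath I E ∧ (d, x.2) ∈ evalPath I F}
  | .union E F => evalPath I E ∪ evalPath I F
  | .star E => {x | x.1 ∈ graphNodes I.graph ∧
      Relation.ReflTransGen (fun a b => (a, b) ∈ evalPath I E) x.1 x.2}
  | .diff E F => evalPath I E \ evalPath I F
end

/-- the assignment with empty labelling, used to evaluate shape-name-free
expressions directly over a data graph `G` -/
def Assignment.ofGraph (G : Set Atom) : Assignment :=
  ⟨G, fun _ _ => False, fun _ _ h => h.elim⟩
/-! ### Syntactic occurrence lists -/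

mutual
def Shape.shapeNameList {ν : Type} : Shape ν → List ShapeName
  | .top => []
  | .name s => [s]
  | .cls _ => []
  | .const _ => []
  | .and φ ψ => φ.shapeNameList ++ ψ.shapeNameList
  | .not φ => φ.shapeNameList
  | .geq _ E φ => E.shapeNameList ++ φ.shapeNameList
  | .eq E _ => E.shapeNameList
  | .disj E _ => E.shapeNameList
  | .closed _ => []

def SPath.shapeNameList {ν : Type} : SPath ν → List ShapeName
  | .prop _ => []
  | .inv _ => []
  | .shapes φ ψ => φ.shapeNameList ++ ψ.shapeNameList
  | .comp E F => E.shapeNameList ++ F.shapeNameList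
  | .union E F => E.shapeNameList ++ F.shapeNameList
  | .star E => E.shapeNameList
  | .diff E F => E.shapeNameList ++ F.shapeNameList
end

/-- a shape expression is *shape-name free* if no shape name occurs in it -/
def Shape.nameFree {ν : Type} (φ : Shape ν) : Prop := φ.shapeNameList = []

def SPath.nameFree {ν : Type} (E : SPath ν) : Prop := E.shapeNameList = []

mutual
def Shape.clsList {ν : Type} : Shape ν → List ClassName
  | .top => []
  | .name _ => []
  | .cls B => [B]
  | .const _ => []
  | .and φ ψ => φ.clsList ++ ψ.clsList
  | .not φ => φ.clsList
  | .geq _ E φ => E.clsList ++ φ.clsList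
  | .eq E _ => E.clsList
  | .disj E _ => E.clsList
  | .closed _ => []

def SPath.clsList {ν : Type} : SPath ν → List ClassName
  | .prop _ => []
  | .inv _ => []
  | .shapes φ ψ => φ.clsList ++ ψ.clsList
  | .comp E F => E.clsList ++ F.clsList
  | .union E F => E.clsList ++ F.clsList
  | .star E => E.clsList
  | .diff E F => E.clsList ++ F.clsList
end

mutual
def Shape.nodeList {ν : Type} : Shape ν → List ν
  | .top => []
  | .name _ => []
  | .cls _ => []
  | .const c => [c]
  | .and φ ψ => φ.nodeList ++ ψ.nodeList
  | .not φ => φ.nodeList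
  | .geq _ E φ => E.nodeList ++ φ.nodeList
  | .eq E _ => E.nodeList
  | .disj E _ => E.nodeList
  | .closed _ => []

def SPath.nodeList {ν : Type} : SPath ν → List ν
  | .prop _ => []
  | .inv _ => []
  | .shapes φ ψ => φ.nodeList ++ ψ.nodeList
  | .comp E F => E.nodeList ++ F.nodeList
  | .union E F => E.nodeList ++ F.nodeList
  | .star E => E.nodeList
  | .diff E F => E.nodeList ++ F.nodeList
end

/-! ### Renaming of nodes / instantiating variables -/

mutual
def Shape.mapNodes {ν ν' : Type} (f : ν → ν') : Shape ν → Shape ν'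
  | .top => .top
  | .name s => .name s
  | .cls B => .cls B
  | .const c => .const (f c)
  | .and φ ψ => .and (φ.mapNodes f) (ψ.mapNodes f)
  | .not φ => .not (φ.mapNodes f)
  | .geq n E φ => .geq n (E.mapNodes f) (φ.mapNodes f)
  | .eq E p => .eq (E.mapNodes f) p
  | .disj E p => .disj (E.mapNodes f) p
  | .closed P => .closed P

def SPath.mapNodes {ν ν' : Type} (f : ν → ν') : SPath ν → SPath ν'
  | .prop p => .prop p
  | .inv p => .inv p
  | .shapes φ ψ => .shapes (φ.mapNodes f) (ψ.mapNodes f)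
  | .comp E F => .comp (E.mapNodes f) (F.mapNodes f)
  | .union E F => .union (E.mapNodes f) (F.mapNodes f)
  | .star E => .star (E.mapNodes f)
  | .diff E F => .diff (E.mapNodes f) (F.mapNodes f)
end

/-! ### Plain SHACL (no path difference, no shape properties) -/

mutual
def Shape.plain {ν : Type} : Shape ν → Prop
  | .top => True
  | .name _ => True
  | .cls _ => True
  | .const _ => True
  | .and φ ψ => φ.plain ∧ ψ.plain
  | .not φ => φ.plain
  | .geq _ E φ => E.plain ∧ φ.plain
  | .eq E _ => E.plain
  | .disj E _ => E.plain
  | .closed _ => True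

def SPath.plain {ν : Type} : SPath ν → Prop
  | .prop _ => True
  | .inv _ => True
  | .shapes _ _ => False
  | .comp E F => E.plain ∧ F.plain
  | .union E F => E.plain ∧ F.plain
  | .star E => E.plain
  | .diff _ _ => False
end

/-! ### Size (number of symbols) -/

mutual
def Shape.size {ν : Type} : Shape ν → ℕ
  | .top => 1
  | .name _ => 1
  | .cls _ => 1
  | .const _ => 1
  | .and φ ψ => 1 + φ.size + ψ.size
  | .not φ => 1 + φ.size
  | .geq _ E φ => 1 + E.size + φ.size
  | .eq E _ => 1 + E.size
  | .disj E _ => 1 + E.size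
  | .closed P => 1 + P.card

def SPath.size {ν : Type} : SPath ν → ℕ
  | .prop _ => 1
  | .inv _ => 1
  | .shapes φ ψ => 1 + φ.size + ψ.size
  | .comp E F => 1 + E.size + F.size
  | .union E F => 1 + E.size + F.size
  | .star E => 1 + E.size
  | .diff E F => 1 + E.size + F.size
end

/-! ### Substitution of class names and property names -/

mutual
def Shape.substCls {ν : Type} (B : ClassName) : Shape ν → Shape ν → Shape ν
  | .top, _ => .top
  | .name s, _ => .name s
  | .cls B', ψ => if B' = B then ψ else .cls B'
  | .const c, _ => .const c
  | .and φ₁ φ₂, ψ => .and (φ₁.substCls B ψ) (φ₂.substCls B ψ)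
  | .not φ, ψ => .not (φ.substCls B ψ)
  | .geq n E φ, ψ => .geq n (E.substCls B ψ) (φ.substCls B ψ)
  | .eq E p, ψ => .eq (E.substCls B ψ) p
  | .disj E p, ψ => .disj (E.substCls B ψ) p
  | .closed P, _ => .closed P
  termination_by φ _ => sizeOf φ

def SPath.substCls {ν : Type} (B : ClassName) : SPath ν → Shape ν → SPath ν
  | .prop p, _ => .prop p
  | .inv p, _ => .inv p
  | .shapes φ₁ φ₂, ψ => .shapes (φ₁.substCls B ψ) (φ₂.substCls B ψ)
  | .comp E F, ψ => .comp (E.substCls B ψ) (F.substCls B ψ)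
  | .union E F, ψ => .union (E.substCls B ψ) (F.substCls B ψ)
  | .star E, ψ => .star (E.substCls B ψ)
  | .diff E F, ψ => .diff (E.substCls B ψ) (F.substCls B ψ)
  termination_by E _ => sizeOf E
end

/-- the structural inverse of a path expression, used when substituting a
property name `p` inside an inverse `p⁻` -/
def SPath.inverse {ν : Type} : SPath ν → SPath ν
  | .prop p => .inv p
  | .inv p => .prop p
  | .shapes φ ψ => .shapes ψ φ
  | .comp E F => .comp F.inverse E.inverse
  | .union E F => .union E.inverse F.inverse
  | .star E => .star E.inverse
  | .diff E F => .diff E.inverse F.inverse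

mutual
def Shape.substProp {ν : Type} (p : PropName) : Shape ν → SPath ν → Shape ν
  | .top, _ => .top
  | .name s, _ => .name s
  | .cls B, _ => .cls B
  | .const c, _ => .const c
  | .and φ₁ φ₂, E' => .and (φ₁.substProp p E') (φ₂.substProp p E')
  | .not φ, E' => .not (φ.substProp p E')
  | .geq n E φ, E' => .geq n (E.substProp p E') (φ.substProp p E')
  | .eq E q, E' => .eq (E.substProp p E') q
  | .disj E q, E' => .disj (E.substProp p E') q
  | .closed P, _ => .closed P
  termination_by φ _ => sizeOf φ

def SPath.substProp {ν : Type} (p : PropName) : SPath ν → SPath ν → SPath ν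
  | .prop q, E' => if q = p then E' else .prop q
  | .inv q, E' => if q = p then E'.inverse else .inv q
  | .shapes φ₁ φ₂, E' => .shapes (φ₁.substProp p E') (φ₂.substProp p E')
  | .comp E F, E' => .comp (E.substProp p E') (F.substProp p E')
  | .union E F, E' => .union (E.substProp p E') (F.substProp p E')
  | .star E, E' => .star (E.substProp p E')
  | .diff E F, E' => .diff (E.substProp p E') (F.substProp p E')
  termination_by E _ => sizeOf E
end
/-! ### Constraints, targets and shapes graphs -/

/-- a shape constraint `s ↔ φ` -/
structure Constraint (ν : Type) where
  name : ShapeName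
  body : Shape ν

/-- a Boolean combination of target expressions `(φ, s)` -/
inductive Target (ν : Type) where
  | expr : Shape ν → ShapeName → Target ν
  | and : Target ν → Target ν → Target ν
  | or : Target ν → Target ν → Target ν
  | not : Target ν → Target ν

/-- a normal shapes graph `(C, T)` -/
structure NormalSG (ν : Type) where
  constraints : List (Constraint ν)
  target : Target ν

/-- a SHACL⁺ shapes graph: a Boolean combination of normal shapes graphs -/
inductive SG (ν : Type) where
  | normal : NormalSG ν → SG ν
  | and : SG ν → SG ν → SG ν
  | or : SG ν → SG ν → SG ν
  | not : SG ν → SG ν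

/-! #### Lifted syntactic operations -/

def Constraint.substCls {ν : Type} (B : ClassName) (ψ : Shape ν) (c : Constraint ν) :
    Constraint ν := ⟨c.name, c.body.substCls B ψ⟩

def Constraint.substProp {ν : Type} (p : PropName) (E' : SPath ν) (c : Constraint ν) :
    Constraint ν := ⟨c.name, c.body.substProp p E'⟩

def Target.substCls {ν : Type} (B : ClassName) (ψ : Shape ν) : Target ν → Target ν
  | .expr φ s => .expr (φ.substCls B ψ) s
  | .and t u => .and (t.substCls B ψ) (u.substCls B ψ)
  | .or t u => .or (t.substCls B ψ) (u.substCls B ψ)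
  | .not t => .not (t.substCls B ψ)

def Target.substProp {ν : Type} (p : PropName) (E' : SPath ν) : Target ν → Target ν
  | .expr φ s => .expr (φ.substProp p E') s
  | .and t u => .and (t.substProp p E') (u.substProp p E')
  | .or t u => .or (t.substProp p E') (u.substProp p E')
  | .not t => .not (t.substProp p E')

def NormalSG.substCls {ν : Type} (B : ClassName) (ψ : Shape ν) (N : NormalSG ν) :
    NormalSG ν := ⟨N.constraints.map (Constraint.substCls B ψ), N.target.substCls B ψ⟩

def NormalSG.substProp {ν : Type} (p : PropName) (E' : SPath ν) (N : NormalSG ν) :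
    NormalSG ν := ⟨N.constraints.map (Constraint.substProp p E'), N.target.substProp p E'⟩

def SG.substCls {ν : Type} (B : ClassName) (ψ : Shape ν) : SG ν → SG ν
  | .normal N => .normal (N.substCls B ψ)
  | .and S T => .and (S.substCls B ψ) (T.substCls B ψ)
  | .or S T => .or (S.substCls B ψ) (T.substCls B ψ)
  | .not S => .not (S.substCls B ψ)

def SG.substProp {ν : Type} (p : PropName) (E' : SPath ν) : SG ν → SG ν
  | .normal N => .normal (N.substProp p E')
  | .and S T => .and (S.substProp p E') (T.substProp p E')
  | .or S T => .or (S.substProp p E') (T.substProp p E')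
  | .not S => .not (S.substProp p E')

def Target.names {ν : Type} : Target ν → List ShapeName
  | .expr φ s => φ.shapeNameList ++ [s]
  | .and t u => t.names ++ u.names
  | .or t u => t.names ++ u.names
  | .not t => t.names

def Target.nodeList {ν : Type} : Target ν → List ν
  | .expr φ _ => φ.nodeList
  | .and t u => t.nodeList ++ u.nodeList
  | .or t u => t.nodeList ++ u.nodeList
  | .not t => t.nodeList

def Target.clsList {ν : Type} : Target ν → List ClassName
  | .expr φ _ => φ.clsList
  | .and t u => t.clsList ++ u.clsList
  | .or t u => t.clsList ++ u.clsList
  | .not t => t.clsList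

def NormalSG.nodeList {ν : Type} (N : NormalSG ν) : List ν :=
  N.constraints.flatMap (fun c => c.body.nodeList) ++ N.target.nodeList

def NormalSG.clsList {ν : Type} (N : NormalSG ν) : List ClassName :=
  N.constraints.flatMap (fun c => c.body.clsList) ++ N.target.clsList

def SG.nodeList {ν : Type} : SG ν → List ν
  | .normal N => N.nodeList
  | .and S T => S.nodeList ++ T.nodeList
  | .or S T => S.nodeList ++ T.nodeList
  | .not S => S.nodeList

def SG.clsList {ν : Type} : SG ν → List ClassName
  | .normal N => N.clsList
  | .and S T => S.clsList ++ T.clsList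
  | .or S T => S.clsList ++ T.clsList
  | .not S => S.clsList

def Constraint.mapNodes {ν ν' : Type} (f : ν → ν') (c : Constraint ν) : Constraint ν' :=
  ⟨c.name, c.body.mapNodes f⟩

def Target.mapNodes {ν ν' : Type} (f : ν → ν') : Target ν → Target ν'
  | .expr φ s => .expr (φ.mapNodes f) s
  | .and t u => .and (t.mapNodes f) (u.mapNodes f)
  | .or t u => .or (t.mapNodes f) (u.mapNodes f)
  | .not t => .not (t.mapNodes f)

def NormalSG.mapNodes {ν ν' : Type} (f : ν → ν') (N : NormalSG ν) : NormalSG ν' :=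
  ⟨N.constraints.map (Constraint.mapNodes f), N.target.mapNodes f⟩

def SG.mapNodes {ν ν' : Type} (f : ν → ν') : SG ν → SG ν'
  | .normal N => .normal (N.mapNodes f)
  | .and S T => .and (S.mapNodes f) (T.mapNodes f)
  | .or S T => .or (S.mapNodes f) (T.mapNodes f)
  | .not S => .not (S.mapNodes f)

def Target.plain {ν : Type} : Target ν → Prop
  | .expr φ _ => φ.plain
  | .and t u => t.plain ∧ u.plain
  | .or t u => t.plain ∧ u.plain
  | .not t => t.plain

def NormalSG.plain {ν : Type} (N : NormalSG ν) : Prop :=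
  (∀ c ∈ N.constraints, c.body.plain) ∧ N.target.plain

def SG.plain {ν : Type} : SG ν → Prop
  | .normal N => N.plain
  | .and S T => S.plain ∧ T.plain
  | .or S T => S.plain ∧ T.plain
  | .not S => S.plain

def Target.size {ν : Type} : Target ν → ℕ
  | .expr φ _ => 1 + φ.size
  | .and t u => 1 + t.size + u.size
  | .or t u => 1 + t.size + u.size
  | .not t => 1 + t.size

def NormalSG.size {ν : Type} (N : NormalSG ν) : ℕ :=
  (N.constraints.map (fun c => 1 + c.body.size)).sum + N.target.size

def SG.size {ν : Type} : SG ν → ℕ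
  | .normal N => N.size
  | .and S T => 1 + S.size + T.size
  | .or S T => 1 + S.size + T.size
  | .not S => 1 + S.size

/-! #### Well-formedness of shapes graphs -/

/-- `s` (directly) refers to `t` through the constraints `C` -/
def dependsOn {ν : Type} (C : List (Constraint ν)) (s t : ShapeName) : Prop :=
  ∃ c ∈ C, c.name = s ∧ t ∈ c.body.shapeNameList

/-- no shape name directly or indirectly refers to itself -/
def NonRecursive {ν : Type} (C : List (Constraint ν)) : Prop :=
  ∀ s, ¬ Relation.TransGen (dependsOn C) s s

def Target.WF {ν : Type} : Target ν → Prop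
  | .expr φ _ => φ.nameFree
  | .and t u => t.WF ∧ u.WF
  | .or t u => t.WF ∧ u.WF
  | .not t => t.WF

/-- a normal shapes graph is well-formed if its constraints are non-recursive and
define each shape name occurring in them exactly once, the shapes in target
expressions are shape-name free, and each targeted shape name is defined -/
def NormalSG.WF {ν : Type} (N : NormalSG ν) : Prop :=
  (N.constraints.map Constraint.name).Nodup ∧
  NonRecursive N.constraints ∧
  (∀ c ∈ N.constraints, ∀ t ∈ c.body.shapeNameList, t ∈ N.constraints.map Constraint.name) ∧
  N.target.WF ∧
  (∀ s ∈ N.target.names, s ∈ N.constraints.map Constraint.name)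

def SG.WF {ν : Type} : SG ν → Prop
  | .normal N => N.WF
  | .and S T => S.WF ∧ T.WF
  | .or S T => S.WF ∧ T.WF
  | .not S => S.WF

/-! #### Validation -/

def Assignment.modelsConstraint (I : Assignment) (c : Constraint Node) : Prop :=
  {a | I.label c.name a} = evalShape I c.body

def Assignment.modelsTarget (I : Assignment) : Target Node → Prop
  | .expr φ s => evalShape I φ ⊆ {a | I.label s a}
  | .and t u => I.modelsTarget t ∧ I.modelsTarget u
  | .or t u => I.modelsTarget t ∨ I.modelsTarget u
  | .not t => ¬ I.modelsTarget t

/-- `G` validates the normal shapes graph `(C,T)`: some assignment for `G` is a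
model of all constraints and of the target -/
def validatesNormal (G : Set Atom) (N : NormalSG Node) : Prop :=
  ∃ I : Assignment, I.graph = G ∧ (∀ c ∈ N.constraints, I.modelsConstraint c) ∧
    I.modelsTarget N.target

/-- validation of Boolean combinations of shapes graphs -/
def validates (G : Set Atom) : SG Node → Prop
  | .normal N => validatesNormal G N
  | .and S T => validates G S ∧ validates G T
  | .or S T => validates G S ∨ validates G T
  | .not S => ¬ validates G S

/-- a shapes graph is satisfiable if some (finite) data graph validates it -/
def SGSat (S : SG Node) : Prop := ∃ G : Set Atom, G.Finite ∧ validates G S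
/-! ### Update actions -/

/-- basic actions `(B ⊕← φ)`, `(B ⊖← φ)`, `(p ⊕← E)`, `(p ⊖← E)` -/
inductive BasicAction (ν : Type) where
  | addCls : ClassName → Shape ν → BasicAction ν
  | delCls : ClassName → Shape ν → BasicAction ν
  | addProp : PropName → SPath ν → BasicAction ν
  | delProp : PropName → SPath ν → BasicAction ν

/-- complex actions `∅`, `β·α` and `(S'?α₁[α₂])·α` -/
inductive UAction (ν : Type) where
  | nil : UAction ν
  | seq : BasicAction ν → UAction ν → UAction ν
  | cond : SG ν → UAction ν → UAction ν → UAction ν → UAction ν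

/-- well-formedness: the shapes used in basic actions are shape-name free and the
shapes graphs used as preconditions are well-formed -/
def BasicAction.WF {ν : Type} : BasicAction ν → Prop
  | .addCls _ φ => φ.nameFree
  | .delCls _ φ => φ.nameFree
  | .addProp _ E => E.nameFree
  | .delProp _ E => E.nameFree

def UAction.WF {ν : Type} : UAction ν → Prop
  | .nil => True
  | .seq β α => β.WF ∧ α.WF
  | .cond S a₁ a₂ rest => S.WF ∧ a₁.WF ∧ a₂.WF ∧ rest.WF

def BasicAction.plain {ν : Type} : BasicAction ν → Prop
  | .addCls _ φ => φ.plain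
  | .delCls _ φ => φ.plain
  | .addProp _ E => E.plain
  | .delProp _ E => E.plain

def BasicAction.nodeList {ν : Type} : BasicAction ν → List ν
  | .addCls _ φ => φ.nodeList
  | .delCls _ φ => φ.nodeList
  | .addProp _ E => E.nodeList
  | .delProp _ E => E.nodeList

def UAction.nodeList {ν : Type} : UAction ν → List ν
  | .nil => []
  | .seq β α => β.nodeList ++ α.nodeList
  | .cond S a₁ a₂ rest => S.nodeList ++ a₁.nodeList ++ a₂.nodeList ++ rest.nodeList

def BasicAction.mapNodes {ν ν' : Type} (f : ν → ν') : BasicAction ν → BasicAction ν'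
  | .addCls B φ => .addCls B (φ.mapNodes f)
  | .delCls B φ => .delCls B (φ.mapNodes f)
  | .addProp p E => .addProp p (E.mapNodes f)
  | .delProp p E => .delProp p (E.mapNodes f)

def UAction.mapNodes {ν ν' : Type} (f : ν → ν') : UAction ν → UAction ν'
  | .nil => .nil
  | .seq β α => .seq (β.mapNodes f) (α.mapNodes f)
  | .cond S a₁ a₂ rest =>
      .cond (S.mapNodes f) (a₁.mapNodes f) (a₂.mapNodes f) (rest.mapNodes f)

/-- the length `l(α)` of a complex action -/
def UAction.size {ν : Type} : UAction ν → ℕ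
  | .nil => 0
  | .seq _ α => 1 + α.size
  | .cond _ a₁ a₂ rest => 1 + a₁.size + a₂.size + rest.size

/-- composition (concatenation) of complex actions -/
def UAction.comp {ν : Type} : UAction ν → UAction ν → UAction ν
  | .nil, b => b
  | .seq β a, b => .seq β (a.comp b)
  | .cond S a₁ a₂ rest, b => .cond S a₁ a₂ (rest.comp b)

theorem UAction.size_comp {ν : Type} (a b : UAction ν) :
    (a.comp b).size = a.size + b.size := by
  induction a with
  | nil => simp [UAction.comp, UAction.size]
  | seq β a ih => simp only [UAction.comp, UAction.size, ih]; omega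
  | cond S a₁ a₂ rest ih₁ ih₂ ih₃ => simp only [UAction.comp, UAction.size, ih₃]; omega

/-- a sequence of basic actions, as a complex action -/
def UAction.ofList {ν : Type} (l : List (BasicAction ν)) : UAction ν :=
  l.foldr UAction.seq UAction.nil

/-! ### The update `up(G, α)` -/

/-- the effect of a basic ground action on a data graph -/
def upBasic (G : Set Atom) : BasicAction Node → Set Atom
  | .addCls B φ => G ∪ {t | ∃ a ∈ evalShape (Assignment.ofGraph G) φ, t = Atom.cls B a}
  | .delCls B φ => G \ {t | ∃ a ∈ evalShape (Assignment.ofGraph G) φ, t = Atom.cls B a}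
  | .addProp p E => G ∪ {t | ∃ x ∈ evalPath (Assignment.ofGraph G) E, t = Atom.prop p x.1 x.2}
  | .delProp p E => G \ {t | ∃ x ∈ evalPath (Assignment.ofGraph G) E, t = Atom.prop p x.1 x.2}

/-- the result of applying a ground complex action to a data graph -/
noncomputable def up : Set Atom → UAction Node → Set Atom
  | G, .nil => G
  | G, .seq β α => up (upBasic G β) α
  | G, .cond S a₁ a₂ rest =>
      @ite _ (validates G S) (Classical.propDecidable _)
        (up G (a₁.comp rest)) (up G (a₂.comp rest))
termination_by _ α => α.size
decreasing_by
  · simp only [UAction.size]; omega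
  · simp only [UAction.size_comp, UAction.size]; omega
  · simp only [UAction.size_comp, UAction.size]; omega

/-! ### The regression transformation `tr_α(S)` -/

/-- the substitution on a shapes graph capturing the effect of one basic action -/
def SG.applyBasic {ν : Type} (S : SG ν) : BasicAction ν → SG ν
  | .addCls B φ => S.substCls B (Shape.or (.cls B) φ)
  | .delCls B φ => S.substCls B (Shape.and (.cls B) (Shape.not φ))
  | .addProp p E => S.substProp p (SPath.union (.prop p) E)
  | .delProp p E => S.substProp p (SPath.diff (.prop p) E)

/-- the regression `tr_α(S)` of a shapes graph w.r.t. a ground complex action -/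
def tr {ν : Type} : UAction ν → SG ν → SG ν
  | .nil, S => S
  | .seq β α, S => (tr α S).applyBasic β
  | .cond S' a₁ a₂ rest, S =>
      .and (.or (.not S') (tr (a₁.comp rest) S)) (.or S' (tr (a₂.comp rest) S))
termination_by α _ => α.size
decreasing_by
  · simp only [UAction.size]; omega
  · simp only [UAction.size_comp, UAction.size]; omega
  · simp only [UAction.size_comp, UAction.size]; omega

/-! ### Static validation under updates -/

/-- `α` (an action possibly containing variables) is `S`-preserving: every ground
instance of `α` maps every data graph validating `S` to one validating `S` -/
def Preserving (S : SG Node) (α : UAction (Node ⊕ Var)) : Prop :=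
  ∀ σ : Var → Node, ∀ G : Set Atom, G.Finite → validates G S →
    validates (up G (α.mapNodes (Sum.elim id σ))) S

/-! ### Shapes graphs whose target is given as a set (list) of target expressions -/

/-- `G` validates the shapes graph `(C, T)` where `T` is a set of target
expressions `(φ, s)` -/
def validatesL (G : Set Atom) (C : List (Constraint Node))
    (T : List (Shape Node × ShapeName)) : Prop :=
  ∃ I : Assignment, I.graph = G ∧ (∀ c ∈ C, I.modelsConstraint c) ∧
    ∀ t ∈ T, evalShape I t.1 ⊆ {a | I.label t.2 a}

/-- validation where, in addition, every node appearing in the shapes graph is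
required to appear in the data graph -/
def validatesPlain (G : Set Atom) (C : List (Constraint Node))
    (T : List (Shape Node × ShapeName)) : Prop :=
  (∀ a : Node, ((∃ c ∈ C, a ∈ c.body.nodeList) ∨ (∃ t ∈ T, a ∈ (t.1).nodeList)) →
    a ∈ graphNodes G) ∧
  validatesL G C T

/-- the regression transformation on a set of constraints, for a sequence of
basic actions (applied from left to right) -/
def Constraint.applyBasic {ν : Type} (c : Constraint ν) : BasicAction ν → Constraint ν
  | .addCls B φ => ⟨c.name, c.body.substCls B (Shape.or (.cls B) φ)⟩
  | .delCls B φ => ⟨c.name, c.body.substCls B (Shape.and (.cls B) (Shape.not φ))⟩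
  | .addProp p E => ⟨c.name, c.body.substProp p (SPath.union (.prop p) E)⟩
  | .delProp p E => ⟨c.name, c.body.substProp p (SPath.diff (.prop p) E)⟩

def trC {ν : Type} : List (BasicAction ν) → List (Constraint ν) → List (Constraint ν)
  | [], C => C
  | β :: rest, C => (trC rest C).map (fun c => c.applyBasic β)
mutual

/-- Substitution multiplies occurrence counts, whether or not `B` occurs in `ψ`. -/
theorem Shape.count_substCls {ν : Type} (B : ClassName) (ψ : Shape ν) :
    ∀ φ : Shape ν,
      (φ.substCls B ψ).clsList.count B = φ.clsList.count B * ψ.clsList.count B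
  | .top => by simp [Shape.substCls, Shape.clsList]
  | .name _ => by simp [Shape.substCls, Shape.clsList]
  | .cls B' => by
      by_cases h : B' = B
      · simp [Shape.substCls, Shape.clsList, h]
      · simp [Shape.substCls, Shape.clsList, h]
  | .const _ => by simp [Shape.substCls, Shape.clsList]
  | .and φ₁ φ₂ => by
      simp [Shape.substCls, Shape.clsList, Shape.count_substCls B ψ φ₁,
        Shape.count_substCls B ψ φ₂, add_mul]
  | .not φ => by
      simp [Shape.substCls, Shape.clsList, Shape.count_substCls B ψ φ]
  | .geq _ E φ => by
      simp [Shape.substCls, Shape.clsList, SPath.count_substCls B ψ E,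
        Shape.count_substCls B ψ φ, add_mul]
  | .eq E _ => by
      simp [Shape.substCls, Shape.clsList, SPath.count_substCls B ψ E]
  | .disj E _ => by
      simp [Shape.substCls, Shape.clsList, SPath.count_substCls B ψ E]
  | .closed _ => by simp [Shape.substCls, Shape.clsList]

theorem SPath.count_substCls {ν : Type} (B : ClassName) (ψ : Shape ν) :
    ∀ E : SPath ν,
      (E.substCls B ψ).clsList.count B = E.clsList.count B * ψ.clsList.count B
  | .prop _ => by simp [SPath.substCls, SPath.clsList]
  | .inv _ => by simp [SPath.substCls, SPath.clsList]
  | .shapes φ₁ φ₂ => by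
      simp [SPath.substCls, SPath.clsList, Shape.count_substCls B ψ φ₁,
        Shape.count_substCls B ψ φ₂, add_mul]
  | .comp E F => by
      simp [SPath.substCls, SPath.clsList, SPath.count_substCls B ψ E,
        SPath.count_substCls B ψ F, add_mul]
  | .union E F => by
      simp [SPath.substCls, SPath.clsList, SPath.count_substCls B ψ E,
        SPath.count_substCls B ψ F, add_mul]
  | .star E => by
      simp [SPath.substCls, SPath.clsList, SPath.count_substCls B ψ E]
  | .diff E F => by
      simp [SPath.substCls, SPath.clsList, SPath.count_substCls B ψ E,
        SPath.count_substCls B ψ F, add_mul]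

end

/-- The blow-up for an arbitrary list of indices. Unlike `List.range n`, such a list can be peeled
from the head, which is how `trC` recurses. -/
theorem exists_trC_addCls_eq (s : ShapeName) (B : ClassName) (r : ℕ → PropName) (l : List ℕ) :
    ∃ body : Shape Node,
      trC (l.map (fun i =>
            BasicAction.addCls B (Shape.geq 1 (SPath.prop (r i)) (Shape.cls B))))
          [⟨s, Shape.cls B⟩] = [⟨s, body⟩] ∧
      body.clsList.count B = 2 ^ l.length := by
  induction l with
  | nil => exact ⟨.cls B, rfl, by simp [Shape.clsList]⟩
  | cons i l ih =>
    obtain ⟨body, htr, hcount⟩ := ih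
    refine ⟨body.substCls B
      (Shape.or (.cls B) (Shape.geq 1 (SPath.prop (r i)) (Shape.cls B))), ?_, ?_⟩
    · simp [trC, htr, Constraint.applyBasic]
    · simp [Shape.count_substCls, hcount, Shape.or, Shape.clsList, SPath.clsList, pow_succ]

/-- Regressing the constraint `s ↔ B` through the sequence of
`n` basic actions `(B ⊕← ∃r₁.B)·…·(B ⊕← ∃rₙ.B)` yields a constraint for `s`
whose right-hand side contains exactly `2ⁿ` occurrences of `B`. -/
theorem regression_exponential_blowup
    (s : ShapeName) (B : ClassName) (n : ℕ) (hn : 1 ≤ n) (r : ℕ → PropName) :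
    ∃ body : Shape Node,
      trC ((List.range n).map (fun i =>
            BasicAction.addCls B (Shape.geq 1 (SPath.prop (r i)) (Shape.cls B))))
          [⟨s, Shape.cls B⟩] = [⟨s, body⟩] ∧
      body.clsList.count B = 2 ^ n := by
  simpa using exists_trC_addCls_eq s B r (List.range n)
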